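/- Suppose m, θ, g are C¹ functions on a simply connected open subset of the (ξ,t)-plane satisfying the 2-D KCL: (g sin θ)_t + (m cos θ)_ξ = 0 and (g cos θ)_t - (m sin θ)_ξ = 0. Then there exists a C² map (x,y) of (ξ,t) such that (x_t, y_t) = m (cos θ, sin θ) and (x_ξ, y_ξ) = g (-sin θ, cos θ). -/

import Mathlib

open Topology

/-- On a simply connected, locally path connected space, a family of local functions whose
pairwise differences are locally constant can be corrected by locally constant functions to a
single global function. -/
theorem SimplyConnectedSpace.exists_eventually_sub_eq {X A : Type*} [TopologicalSpace X]
    [SimplyConnectedSpace X] [LocallyPathConnectedSpace X] [AddCommGroup A]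
    {U : X → Set X} (hUo : ∀ i, IsOpen (U i)) (hU : ∀ i, i ∈ U i) (f : X → X → A)
    (hf : ∀ i j, ∀ x ∈ U i ∩ U j, ∀ᶠ y in 𝓝 x, f i y - f j y = f i x - f j x) :
    ∃ h : X → A, ∀ x, ∀ᶠ y in 𝓝 x, h y - f x y = h x - f x x := by
  let : TopologicalSpace A := ⊥
  have : DiscreteTopology A := ⟨rfl⟩
  let Z : FiberBundleCore X X A :=
    { baseSet := U
      isOpen_baseSet := hUo
      indexAt := id
      mem_baseSet_at := hU
      coordChange := fun i j x v => v + f i x - f j x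
      coordChange_self := fun i x _ v => by simp
      continuousOn_coordChange := by
        rintro i j ⟨x, v⟩ ⟨hx, -⟩
        refine ContinuousAt.continuousWithinAt ?_
        rw [ContinuousAt, nhds_prod_eq, nhds_discrete A, Filter.tendsto_pure,
          Filter.prod_pure, Filter.eventually_map]
        filter_upwards [hf i j x hx] with y hy
        simp only [add_sub_assoc, hy]
      coordChange_comp := fun i j k x _ v => by simp }
  have hcov : IsCoveringMap (Bundle.TotalSpace.proj : Bundle.TotalSpace A Z.Fiber → X) :=
    FiberBundle.isCoveringMap
  obtain ⟨x₀⟩ : Nonempty X := inferInstance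
  obtain ⟨σ, ⟨-, hσ⟩, -⟩ :=
    hcov.existsUnique_continuousMap_lifts (ContinuousMap.id X) x₀ ⟨x₀, (0 : A)⟩ rfl
  have hproj (x : X) : (σ x).proj = x := congrFun hσ x
  let v : X → A := fun x => (σ x).2
  refine ⟨fun x => v x + f x x, fun x => ?_⟩
  have hsource : σ x ∈ (Z.localTriv x).source := by
    rw [Z.mem_localTriv_source, hproj]
    exact hU x
  have hcont : ContinuousAt (fun y => (Z.localTriv x (σ y)).2) x :=
    continuousAt_snd.comp
      (((Z.localTriv x).continuousAt hsource).comp (map_continuous σ).continuousAt)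
  rw [ContinuousAt, nhds_discrete A, Filter.tendsto_pure] at hcont
  have hval (y : X) : (Z.localTriv x (σ y)).2 = v y + f y y - f x y := by
    rw [Z.localTriv_apply]
    change v y + f (σ y).proj (σ y).proj - f x (σ y).proj = _
    rw [hproj]
  simpa only [hval] using hcont

/-- **Poincaré lemma** for `1`-forms: a closed `1`-form on a simply connected open set is exact. -/
theorem IsSimplyConnected.exists_forall_hasFDerivAt_of_fderiv_symmetric {E F : Type*}
    [NormedAddCommGroup E] [NormedSpace ℝ E] [NormedAddCommGroup F] [NormedSpace ℝ F]
    [CompleteSpace F] {s : Set E} {ω : E → E →L[ℝ] F} (hsc : IsSimplyConnected s)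
    (hs : IsOpen s) (hω : DifferentiableOn ℝ ω s)
    (hdω : ∀ a ∈ s, ∀ u v, fderiv ℝ ω a u v = fderiv ℝ ω a v u) :
    ∃ f : E → F, ∀ a ∈ s, HasFDerivAt f (ω a) a := by
  classical
  have := hsc.simplyConnectedSpace
  have := hs.locallyPathConnectedSpace
  have hloc (x : s) : ∃ r > 0, ∃ f : E → F, ∀ a ∈ Metric.ball (x : E) r,
      HasFDerivAt f (ω a) a := by
    obtain ⟨r, hr, hrs⟩ := Metric.isOpen_iff.1 hs x x.2
    exact ⟨r, hr, (convex_ball _ r).exists_forall_hasFDerivAt_of_fderiv_symmetric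
      Metric.isOpen_ball (hω.mono hrs) fun a ha => hdω a (hrs ha)⟩
  choose r hr f hf using hloc
  obtain ⟨h, hh⟩ := SimplyConnectedSpace.exists_eventually_sub_eq
    (U := fun x : s => Subtype.val ⁻¹' Metric.ball (x : E) (r x))
    (fun i => Metric.isOpen_ball.preimage continuous_subtype_val)
    (fun i => Metric.mem_ball_self (hr i)) (fun i y => f i y) <| by
      rintro i j x ⟨hxi, hxj⟩
      have hO : IsOpen (Metric.ball (i : E) (r i) ∩ Metric.ball (j : E) (r j)) :=
        Metric.isOpen_ball.inter Metric.isOpen_ball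
      obtain ⟨ε, hε, hball⟩ := Metric.isOpen_iff.1 hO x ⟨hxi, hxj⟩
      have hd (a) (ha : a ∈ Metric.ball (x : E) ε) :
          HasFDerivAt (fun a => f i a - f j a) (0 : E →L[ℝ] F) a := by
        simpa using (hf i a (hball ha).1).fun_sub (hf j a (hball ha).2)
      filter_upwards [(Metric.isOpen_ball.preimage continuous_subtype_val).mem_nhds
        (Metric.mem_ball_self hε : (x : E) ∈ Metric.ball (x : E) ε)] with y hy
      exact Metric.isOpen_ball.is_const_of_fderiv_eq_zero (convex_ball _ ε).isPreconnected
        (fun a ha => (hd a ha).differentiableAt.differentiableWithinAt)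
        (fun a ha => (hd a ha).fderiv) hy (Metric.mem_ball_self hε)
  refine ⟨fun a => if ha : a ∈ s then h ⟨a, ha⟩ else 0, fun a ha => ?_⟩
  refine ((hf ⟨a, ha⟩ a (Metric.mem_ball_self (hr _))).add_const
    (h ⟨a, ha⟩ - f ⟨a, ha⟩ a)).congr_of_eventuallyEq ?_
  have hev := hh ⟨a, ha⟩
  rw [nhds_subtype_eq_comap, Filter.eventually_comap] at hev
  filter_upwards [hev, hs.mem_nhds ha] with y hy hys
  rw [dif_pos hys, ← hy ⟨y, hys⟩ rfl]
  abel

/-- A `C¹` planar `1`-form `a dξ + b dt` with `a_t = b_ξ` on a simply connected open set has a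
`C²` potential. -/
theorem IsSimplyConnected.exists_contDiffOn_potential {s : Set (ℝ × ℝ)}
    (hsc : IsSimplyConnected s) (hs : IsOpen s) {a b : ℝ × ℝ → ℝ}
    (ha : ContDiffOn ℝ 1 a s) (hb : ContDiffOn ℝ 1 b s)
    (hab : ∀ p ∈ s, fderiv ℝ a p (0, 1) = fderiv ℝ b p (1, 0)) :
    ∃ f : ℝ × ℝ → ℝ, ContDiffOn ℝ 2 f s ∧
      ∀ p ∈ s, fderiv ℝ f p (1, 0) = a p ∧ fderiv ℝ f p (0, 1) = b p := by
  let ω : ℝ × ℝ → ℝ × ℝ →L[ℝ] ℝ := fun p =>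
    a p • ContinuousLinearMap.fst ℝ ℝ ℝ + b p • ContinuousLinearMap.snd ℝ ℝ ℝ
  have hωc : ContDiffOn ℝ 1 ω s :=
    (ha.smul contDiffOn_const).add (hb.smul contDiffOn_const)
  have hdecomp (L : ℝ × ℝ →L[ℝ] ℝ) (u : ℝ × ℝ) : L u = u.1 * L (1, 0) + u.2 * L (0, 1) := by
    conv_lhs => rw [show u = u.1 • ((1, 0) : ℝ × ℝ) + u.2 • ((0, 1) : ℝ × ℝ) by ext <;> simp]
    simp only [map_add, map_smul, smul_eq_mul]
  have hclosed : ∀ p ∈ s, ∀ u v, fderiv ℝ ω p u v = fderiv ℝ ω p v u := by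
    intro p hp u v
    have hda := ((ha.differentiableOn one_ne_zero).differentiableAt (hs.mem_nhds hp)).hasFDerivAt
    have hdb := ((hb.differentiableOn one_ne_zero).differentiableAt (hs.mem_nhds hp)).hasFDerivAt
    have hdω : HasFDerivAt ω _ p :=
      (hda.smul_const (ContinuousLinearMap.fst ℝ ℝ ℝ)).add
        (hdb.smul_const (ContinuousLinearMap.snd ℝ ℝ ℝ))
    rw [hdω.fderiv]
    simp only [add_apply, ContinuousLinearMap.smulRight_apply,
      smul_apply, ContinuousLinearMap.coe_fst', ContinuousLinearMap.coe_snd',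
      smul_eq_mul]
    rw [hdecomp _ u, hdecomp (fderiv ℝ b p) u, hdecomp _ v, hdecomp (fderiv ℝ b p) v, hab p hp]
    ring
  obtain ⟨f, hf⟩ := hsc.exists_forall_hasFDerivAt_of_fderiv_symmetric hs
    (hωc.differentiableOn one_ne_zero) hclosed
  refine ⟨f, ?_, fun p hp => ?_⟩
  · rw [show (2 : WithTop ℕ∞) = 1 + 1 from one_add_one_eq_two.symm,
      contDiffOn_succ_iff_fderiv_of_isOpen hs]
    exact ⟨fun p hp => (hf p hp).differentiableAt.differentiableWithinAt, by simp,
      hωc.congr fun p hp => (hf p hp).fderiv⟩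
  · rw [(hf p hp).fderiv]
    simp [ω]


/-- On a simply connected open subset of the `(ξ, t)`-plane, C¹ solutions
`m, θ, g` of the 2-D KCL admit a C² potential map `(x, y)` with
`(x_t, y_t) = m (cos θ, sin θ)` and `(x_ξ, y_ξ) = g (-sin θ, cos θ)`. -/
theorem kcl_implies_ray_map
    (s : Set (ℝ × ℝ)) (hs : IsOpen s) (hsc : SimplyConnectedSpace s)
    (m θ g : ℝ × ℝ → ℝ)
    (hm : ContDiffOn ℝ 1 m s) (hθ : ContDiffOn ℝ 1 θ s) (hg : ContDiffOn ℝ 1 g s)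
    (hkcl₁ : ∀ p ∈ s,
        fderiv ℝ (fun q => g q * Real.sin (θ q)) p (0, 1)
          + fderiv ℝ (fun q => m q * Real.cos (θ q)) p (1, 0) = 0)
    (hkcl₂ : ∀ p ∈ s,
        fderiv ℝ (fun q => g q * Real.cos (θ q)) p (0, 1)
          - fderiv ℝ (fun q => m q * Real.sin (θ q)) p (1, 0) = 0) :
    ∃ x y : ℝ × ℝ → ℝ, ContDiffOn ℝ 2 x s ∧ ContDiffOn ℝ 2 y s ∧
      ∀ p ∈ s,
        fderiv ℝ x p (0, 1) = m p * Real.cos (θ p) ∧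
        fderiv ℝ y p (0, 1) = m p * Real.sin (θ p) ∧
        fderiv ℝ x p (1, 0) = -(g p) * Real.sin (θ p) ∧
        fderiv ℝ y p (1, 0) = g p * Real.cos (θ p) := by
  have hsin : ContDiffOn ℝ 1 (fun q => Real.sin (θ q)) s := Real.contDiff_sin.comp_contDiffOn hθ
  have hcos : ContDiffOn ℝ 1 (fun q => Real.cos (θ q)) s := Real.contDiff_cos.comp_contDiffOn hθ
  have hsc' : IsSimplyConnected s := hsc
  obtain ⟨x, hx, hdx⟩ := hsc'.exists_contDiffOn_potential hs (hg.mul hsin).neg (hm.mul hcos) <| by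
    intro p hp
    rw [fderiv_fun_neg, neg_apply]
    exact neg_eq_of_add_eq_zero_right (hkcl₁ p hp)
  obtain ⟨y, hy, hdy⟩ := hsc'.exists_contDiffOn_potential hs (hg.mul hcos) (hm.mul hsin)
    fun p hp => sub_eq_zero.1 (hkcl₂ p hp)
  exact ⟨x, y, hx, hy, fun p hp =>
    ⟨(hdx p hp).2, (hdy p hp).2, (hdx p hp).1.trans (neg_mul _ _).symm, (hdy p hp).1⟩⟩
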